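/- arXiv:1508.02996 — 7 statements merged into one kernel-verified Lean document; each statement's English description precedes it below -/
import Mathlib

section
/- Let X be a metric space and n ≥ 0 an integer. The following are equivalent: (1) for every R > 0 there exists a uniformly bounded cover 𝒱 of X with Lebesgue number at least R and multiplicity at most n+1; (2) for every R > 0 there exist families 𝒱₁, …, 𝒱_{n+1} of subsets of X such that 𝒱 = 𝒱₁ ∪ … ∪ 𝒱_{n+1} is a uniformly bounded cover of X and each 𝒱ᵢ is R-disjoint. -/
open Metric Set

/-- A set `U` is uniformly bounded by `D`: all pairwise distances are at most `D`. -/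
def UBdd {X : Type*} [MetricSpace X] (D : ℝ) (U : Set X) : Prop :=
  ∀ x ∈ U, ∀ y ∈ U, dist x y ≤ D

/-- A family of subsets covers `X`. -/
def IsCover {X : Type*} (𝒱 : Set (Set X)) : Prop := ∀ x : X, ∃ U ∈ 𝒱, x ∈ U

/-- The cover `𝒱` has Lebesgue number at least `R`: every open `R`-ball is
contained in some member of `𝒱`. -/
def LebAtLeast {X : Type*} [MetricSpace X] (R : ℝ) (𝒱 : Set (Set X)) : Prop :=
  ∀ x : X, ∃ U ∈ 𝒱, Metric.ball x R ⊆ U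

/-- The family `𝒱` has multiplicity at most `m`: every point belongs to at most
`m` members of `𝒱`. -/
def MultAtMost {X : Type*} (m : ℕ) (𝒱 : Set (Set X)) : Prop :=
  ∀ x : X, {U ∈ 𝒱 | x ∈ U}.Finite ∧ {U ∈ 𝒱 | x ∈ U}.ncard ≤ m

/-- The family `𝒱` is `R`-disjoint: points of distinct members are at distance at least `R`. -/
def RDisjoint {X : Type*} [MetricSpace X] (R : ℝ) (𝒱 : Set (Set X)) : Prop :=
  ∀ A ∈ 𝒱, ∀ B ∈ 𝒱, A ≠ B → ∀ a ∈ A, ∀ b ∈ B, R ≤ dist a b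

/-- A map is coarse (bornologous). -/
def Coarse {X Y : Type*} [MetricSpace X] [MetricSpace Y] (f : X → Y) : Prop :=
  ∀ R > (0:ℝ), ∃ S > (0:ℝ), ∀ x x' : X, dist x x' ≤ R → dist (f x) (f x') ≤ S

/-- A map is coarsely `n`-to-`1`: preimages of sets of diameter at most `R` can be covered
by at most `n` sets of diameter at most `S`, where `S` depends only on `R`. -/
def CoarselyNTo1 {X Y : Type*} [MetricSpace X] [MetricSpace Y] (n : ℕ) (f : X → Y) : Prop :=
  ∀ R > (0:ℝ), ∃ S > (0:ℝ), ∀ A : Set Y, UBdd R A →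
    ∃ B : Fin n → Set X, f ⁻¹' A ⊆ ⋃ i, B i ∧ ∀ i, UBdd S (B i)

/-- The star of a set `B` with respect to a family `𝒰`: the union of all members of `𝒰`
meeting `B`. -/
def StarOf {X : Type*} (B : Set X) (𝒰 : Set (Set X)) : Set X :=
  ⋃₀ {U ∈ 𝒰 | (U ∩ B).Nonempty}

/-!
Given families `V i` that are `2R`-disjoint, thickening all their members by `R` gives a cover with
Lebesgue number at least `R`, and a point lies in at most one thickened member of each family.

Conversely, let `𝒱` have multiplicity at most `m` and Lebesgue number at least `(m + 1) R`, and for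
a point `x` consider the members of `𝒱` containing `ball x r`. This finite set shrinks as `r` grows
and has between `1` and `m` elements for `0 < r ≤ (m + 1) R`, so it takes the same value `S` at
`r = k R` and `r + R` for some `1 ≤ k ≤ m`; put `x` in the piece labelled by `S`. If `x` and `y` are
less than `R` apart, with labels `S`, `T` attained at radii `r ≤ s`, then
`ball x r ⊆ ball y (s + R)`, so `T ⊆ S`. Hence pieces with distinct labels of the same cardinality
are `R`-disjoint.
-/

theorem exists_succ_eq_of_antitone_of_ncard_lt {α : Type*} {s : ℕ → Set α} (hs : Antitone s)
    (hfin : (s 0).Finite) {m : ℕ} (hm : (s 0).ncard < (s m).ncard + m) :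
    ∃ k < m, s (k + 1) = s k := by
  by_contra! hne
  have ncard_add_le (k : ℕ) (hk : k ≤ m) : (s k).ncard + k ≤ (s 0).ncard := by
    induction k with
    | zero => exact le_rfl
    | succ k ih =>
      have hlt : (s (k + 1)).ncard < (s k).ncard :=
        ncard_lt_ncard ((hs k.le_succ).ssubset_of_ne (hne k hk)) (hfin.subset (hs k.zero_le))
      have := ih (Nat.le_of_succ_le hk)
      omega
  exact (ncard_add_le m le_rfl).not_gt hm

theorem MultAtMost.iUnion {X ι : Type*} [Fintype ι] {V : ι → Set (Set X)} {m : ι → ℕ}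
    (h : ∀ i, MultAtMost (m i) (V i)) : MultAtMost (∑ i, m i) (⋃ i, V i) := by
  intro x
  have members_eq : {U ∈ ⋃ i, V i | x ∈ U} = ⋃ i, {U ∈ V i | x ∈ U} := by
    ext U
    simp
  rw [members_eq]
  exact ⟨finite_iUnion fun i => (h i x).1,
    (ncard_iUnion_le_of_fintype _).trans (Finset.sum_le_sum fun i _ => (h i x).2)⟩

section Thickening

variable {X : Type*} [MetricSpace X] {R D : ℝ} {𝒱 : Set (Set X)}

theorem LebAtLeast.isCover (h : LebAtLeast R 𝒱) (hR : 0 < R) : IsCover 𝒱 := fun x =>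
  let ⟨U, hU, hball⟩ := h x
  ⟨U, hU, hball (mem_ball_self hR)⟩

theorem IsCover.lebAtLeast_image_thickening (h : IsCover 𝒱) (R : ℝ) :
    LebAtLeast R (thickening R '' 𝒱) := fun x =>
  let ⟨_, hU, hx⟩ := h x
  ⟨_, mem_image_of_mem _ hU, ball_subset_thickening hx R⟩

theorem UBdd.thickening {U : Set X} (h : UBdd D U) (R : ℝ) :
    UBdd (D + 2 * R) (thickening R U) := by
  intro x hx y hy
  obtain ⟨a, ha, hxa⟩ := mem_thickening_iff.1 hx
  obtain ⟨b, hb, hyb⟩ := mem_thickening_iff.1 hy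
  calc dist x y ≤ dist x a + dist a b + dist b y := dist_triangle4 x a b y
    _ ≤ R + D + R := by
      rw [dist_comm b y]
      gcongr
      exact h a ha b hb
    _ = D + 2 * R := by ring

theorem RDisjoint.multAtMost_image_thickening (h : RDisjoint (2 * R) 𝒱) :
    MultAtMost 1 (thickening R '' 𝒱) := by
  intro x
  have members_subsingleton : {W ∈ thickening R '' 𝒱 | x ∈ W}.Subsingleton := by
    rintro _ ⟨⟨A, hA, rfl⟩, hxA⟩ _ ⟨⟨B, hB, rfl⟩, hxB⟩
    by_contra hne
    obtain ⟨a, ha, hxa⟩ := mem_thickening_iff.1 hxA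
    obtain ⟨b, hb, hxb⟩ := mem_thickening_iff.1 hxB
    have hab : 2 * R ≤ dist a b := h A hA B hB (ne_of_apply_ne _ hne) a ha b hb
    linarith [dist_triangle_left a b x]
  have := members_subsingleton.finite.to_subtype
  exact ⟨members_subsingleton.finite, ncard_le_one_iff_subsingleton.2 members_subsingleton⟩

end Thickening

section Plateau

variable {X : Type*} [PseudoMetricSpace X] {𝒱 S T : Set (Set X)} {x y : X} {r s R : ℝ}

/-- The members of the family `𝒱` that contain the open ball of radius `r` around `x`. As `r` grows
this set shrinks, and its variation with `r` is what sorts the points of `X` into pieces. -/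
def membersContainingBall (𝒱 : Set (Set X)) (x : X) (r : ℝ) : Set (Set X) :=
  {U ∈ 𝒱 | ball x r ⊆ U}

/-- The piece of `X` labelled by `S`: the points `x` for which `membersContainingBall 𝒱 x` is
constantly equal to `S` on some interval `[r, r + R]` with `0 < r`. Since this set is antitone in
the radius, only the two endpoints are mentioned. -/
def plateau (𝒱 : Set (Set X)) (R : ℝ) (S : Set (Set X)) : Set X :=
  {x | ∃ r > 0, membersContainingBall 𝒱 x r = S ∧ membersContainingBall 𝒱 x (r + R) = S}

/-- The family of all pieces labelled by sets of exactly `m` members; these are the `R`-disjoint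
families of Ostrand's theorem. The extended cardinality excludes infinite labels also for
`m = 0`. -/
def plateauFamily (𝒱 : Set (Set X)) (R : ℝ) (m : ℕ) : Set (Set X) :=
  plateau 𝒱 R '' {S | S.encard = m}

theorem membersContainingBall_subset_of_add_dist_le (h : s + dist y x ≤ r) :
    membersContainingBall 𝒱 x r ⊆ membersContainingBall 𝒱 y s :=
  fun _ hU => ⟨hU.1, (ball_subset_ball' h).trans hU.2⟩

theorem membersContainingBall_antitone : Antitone (membersContainingBall 𝒱 x) := fun _ _ h =>
  membersContainingBall_subset_of_add_dist_le (by simpa using h)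

theorem membersContainingBall_subset_setOf_mem (hr : 0 < r) :
    membersContainingBall 𝒱 x r ⊆ {U ∈ 𝒱 | x ∈ U} :=
  fun _ hU => ⟨hU.1, hU.2 (mem_ball_self hr)⟩

theorem MultAtMost.finite_membersContainingBall {m : ℕ} (h : MultAtMost m 𝒱) (hr : 0 < r) :
    (membersContainingBall 𝒱 x r).Finite :=
  (h x).1.subset (membersContainingBall_subset_setOf_mem hr)

theorem MultAtMost.ncard_membersContainingBall_le {m : ℕ} (h : MultAtMost m 𝒱) (hr : 0 < r) :
    (membersContainingBall 𝒱 x r).ncard ≤ m :=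
  (ncard_le_ncard (membersContainingBall_subset_setOf_mem hr) (h x).1).trans (h x).2

theorem subset_setOf_mem_of_mem_plateau (hx : x ∈ plateau 𝒱 R S) : S ⊆ {U ∈ 𝒱 | x ∈ U} := by
  obtain ⟨r, hr, rfl, -⟩ := hx
  exact membersContainingBall_subset_setOf_mem hr

theorem subset_or_subset_of_mem_plateau (hx : x ∈ plateau 𝒱 R S) (hy : y ∈ plateau 𝒱 R T)
    (hxy : dist x y ≤ R) : S ⊆ T ∨ T ⊆ S := by
  obtain ⟨r, -, hSr, hSrR⟩ := hx
  obtain ⟨s, -, hTs, hTsR⟩ := hy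
  rcases le_total r s with hrs | hsr
  · right
    rw [← hTsR, ← hSr]
    exact membersContainingBall_subset_of_add_dist_le (add_le_add hrs hxy)
  · left
    rw [← hSrR, ← hTs]
    exact membersContainingBall_subset_of_add_dist_le (add_le_add hsr (dist_comm x y ▸ hxy))

end Plateau

section PlateauFamily

variable {X : Type*} [MetricSpace X] {𝒱 : Set (Set X)} {R D : ℝ} {m : ℕ}

theorem rDisjoint_plateauFamily (𝒱 : Set (Set X)) (R : ℝ) (m : ℕ) :
    RDisjoint R (plateauFamily 𝒱 R m) := by
  rintro _ ⟨S, hS : S.encard = m, rfl⟩ _ ⟨T, hT : T.encard = m, rfl⟩ hne x hx y hy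
  by_contra! hxy
  have hcard : S.encard = T.encard := hS.trans hT.symm
  have hST : S = T := by
    rcases subset_or_subset_of_mem_plateau hx hy hxy.le with h | h
    · exact (finite_of_encard_eq_coe hS).eq_of_subset_of_encard_le h hcard.ge
    · exact ((finite_of_encard_eq_coe hT).eq_of_subset_of_encard_le h hcard.le).symm
  exact hne (congrArg _ hST)

theorem uBdd_of_mem_plateauFamily (h𝒱 : ∀ U ∈ 𝒱, UBdd D U) (hm : m ≠ 0) {W : Set X}
    (hW : W ∈ plateauFamily 𝒱 R m) : UBdd D W := by
  obtain ⟨S, hS : S.encard = m, rfl⟩ := hW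
  obtain ⟨U, hU⟩ : S.Nonempty := encard_ne_zero.1 (by simpa [hS] using hm)
  intro x hx y hy
  have ⟨hU𝒱, hxU⟩ := subset_setOf_mem_of_mem_plateau hx hU
  exact h𝒱 U hU𝒱 x hxU y (subset_setOf_mem_of_mem_plateau hy hU).2

theorem LebAtLeast.nonempty_membersContainingBall {r : ℝ} (h : LebAtLeast R 𝒱) (hr : r ≤ R)
    (x : X) : (membersContainingBall 𝒱 x r).Nonempty :=
  let ⟨U, hU, hball⟩ := h x
  ⟨U, hU, (ball_subset_ball hr).trans hball⟩

theorem exists_mem_plateau (hR : 0 < R) (hleb : LebAtLeast ((m + 1) * R) 𝒱)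
    (hmul : MultAtMost m 𝒱) (x : X) :
    ∃ S : Set (Set X), S.Finite ∧ 0 < S.ncard ∧ S.ncard ≤ m ∧ x ∈ plateau 𝒱 R S := by
  let s (k : ℕ) : Set (Set X) := membersContainingBall 𝒱 x ((k + 1) * R)
  have radius_pos (k : ℕ) : 0 < (k + 1) * R := by positivity
  have hanti : Antitone s := fun k l hkl => membersContainingBall_antitone (by gcongr)
  have hfin (k : ℕ) : (s k).Finite := hmul.finite_membersContainingBall (radius_pos k)
  have hle (k : ℕ) : (s k).ncard ≤ m := hmul.ncard_membersContainingBall_le (radius_pos k)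
  have hpos (k : ℕ) (hk : k ≤ m) : 0 < (s k).ncard :=
    (ncard_pos (hfin k)).2 (hleb.nonempty_membersContainingBall (by gcongr) x)
  obtain ⟨k, hk, hstable⟩ : ∃ k < m, s (k + 1) = s k :=
    exists_succ_eq_of_antitone_of_ncard_lt hanti (hfin 0)
      (by linarith [hle 0, hpos m le_rfl])
  refine ⟨s k, hfin k, hpos k hk.le, hle k, (k + 1) * R, radius_pos k, rfl, ?_⟩
  simpa only [s, Nat.cast_add_one, add_one_mul] using hstable

theorem isCover_iUnion_plateauFamily (hR : 0 < R) (hleb : LebAtLeast ((m + 1) * R) 𝒱)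
    (hmul : MultAtMost m 𝒱) : IsCover (⋃ i : Fin m, plateauFamily 𝒱 R (i + 1)) := by
  intro x
  obtain ⟨S, hfin, hpos, hle, hx⟩ := exists_mem_plateau hR hleb hmul x
  have hcard : S.encard = (S.ncard - 1 + 1 : ℕ) := by
    rw [Nat.sub_add_cancel hpos, hfin.cast_ncard_eq]
  exact ⟨plateau 𝒱 R S, mem_iUnion.2 ⟨⟨S.ncard - 1, by omega⟩, S, hcard, rfl⟩, hx⟩

end PlateauFamily

/-- Ostrand characterization of asymptotic dimension at most `n` for metric spaces:
covers with large Lebesgue number and multiplicity at most `n+1` exist for all `R`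
iff uniformly bounded covers decomposing into `n+1` many `R`-disjoint families
exist for all `R`. -/
theorem stmt0 {X : Type*} [MetricSpace X] (n : ℕ) :
    (∀ R > (0:ℝ), ∃ 𝒱 : Set (Set X), ∃ D > (0:ℝ), IsCover 𝒱 ∧ (∀ U ∈ 𝒱, UBdd D U) ∧
      LebAtLeast R 𝒱 ∧ MultAtMost (n + 1) 𝒱) ↔
    (∀ R > (0:ℝ), ∃ V : Fin (n + 1) → Set (Set X), ∃ D > (0:ℝ),
      IsCover (⋃ i, V i) ∧ (∀ U ∈ ⋃ i, V i, UBdd D U) ∧ ∀ i, RDisjoint R (V i)) := by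
  constructor
  · intro h R hR
    obtain ⟨𝒱, D, hD, -, hbdd, hleb, hmul⟩ := h (((n + 1 : ℕ) + 1) * R) (by positivity)
    refine ⟨fun i => plateauFamily 𝒱 R (i + 1), D, hD, isCover_iUnion_plateauFamily hR hleb hmul,
      fun W hW => ?_, fun i => rDisjoint_plateauFamily 𝒱 R (i + 1)⟩
    obtain ⟨i, hW⟩ := mem_iUnion.1 hW
    exact uBdd_of_mem_plateauFamily hbdd i.val.succ_ne_zero hW
  · intro h R hR
    obtain ⟨V, D, hD, hcov, hbdd, hdisj⟩ := h (2 * R) (by positivity)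
    have hleb := hcov.lebAtLeast_image_thickening R
    refine ⟨thickening R '' ⋃ i, V i, D + 2 * R, by positivity, hleb.isCover hR,
      forall_mem_image.2 fun U hU => (hbdd U hU).thickening R, hleb, ?_⟩
    rw [image_iUnion]
    simpa using MultAtMost.iUnion fun i => (hdisj i).multAtMost_image_thickening
end

section
/- Let f : X → Y be a function between metric spaces and n ≥ 1 an integer. Then f is coarsely n-to-1 if and only if for all R, S > 0 there exists T > 0 such that for every y ∈ Y the preimage f⁻¹(B(y,S)) of the open ball B(y,S) can be covered by at most n sets, each of diameter at most T, which are pairwise at distance at least R from each other (i.e. dist(a,b) ≥ R whenever a and b lie in two distinct sets of the covering family). -/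
open Metric Set

/-!
For the forward implication, cover the preimage of a ball by `n` sets of diameter at most `D` and
join two of the sets whenever they come within distance `R` of each other. Merging the sets along
the connected components of the resulting graph yields an `R`-disjoint family with the same union.
Since a component has at most `n` vertices, any two points of a merged set are linked by a chain of
at most `n` gaps shorter than `R`, alternating with jumps of length at most `D` inside the original
sets; hence its diameter is at most `D + n * (D + R)`.
-/

section UBdd

variable {X : Type*} [MetricSpace X]

lemma uBdd_ball (x : X) (r : ℝ) : UBdd (2 * r) (ball x r) := by
  intro a ha b hb
  linarith [dist_triangle_right a b x, mem_ball.1 ha, mem_ball.1 hb]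

lemma UBdd.subset_ball {D r : ℝ} {A : Set X} {x : X} (hA : UBdd D A) (hx : x ∈ A) (hr : D < r) :
    A ⊆ ball x r :=
  fun a ha ↦ (hA a ha x hx).trans_lt hr

end UBdd

section ComponentUnion

variable {ι X : Type*}

/-- The family obtained from `B` by merging its members along the connected components of `G`.
To keep the index type `ι`, each merged set is placed at a chosen vertex of its component, and the
empty set at all other vertices. -/
def componentUnion (G : SimpleGraph ι) (B : ι → Set X) (i : ι) : Set X :=
  ⋃ (j : ι) (_ : (G.connectedComponentMk j).out = i), B j

lemma mem_componentUnion {G : SimpleGraph ι} {B : ι → Set X} {i : ι} {x : X} :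
    x ∈ componentUnion G B i ↔ ∃ j, (G.connectedComponentMk j).out = i ∧ x ∈ B j := by
  simp only [componentUnion, mem_iUnion, exists_prop]

lemma iUnion_componentUnion (G : SimpleGraph ι) (B : ι → Set X) :
    ⋃ i, componentUnion G B i = ⋃ i, B i := by
  ext x
  simp only [mem_iUnion, mem_componentUnion]
  exact ⟨fun ⟨_, j, _, hx⟩ ↦ ⟨j, hx⟩, fun ⟨j, hx⟩ ↦ ⟨_, j, rfl, hx⟩⟩

lemma reachable_of_mem_componentUnion {G : SimpleGraph ι} {B : ι → Set X} {i : ι} {x y : X}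
    (hx : x ∈ componentUnion G B i) (hy : y ∈ componentUnion G B i) :
    ∃ j k, G.Reachable j k ∧ x ∈ B j ∧ y ∈ B k := by
  obtain ⟨j, hj, hxj⟩ := mem_componentUnion.1 hx
  obtain ⟨k, hk, hyk⟩ := mem_componentUnion.1 hy
  have same_component : G.connectedComponentMk j = G.connectedComponentMk k :=
    Function.LeftInverse.injective (g := G.connectedComponentMk) Quot.out_eq (hj.trans hk.symm)
  exact ⟨j, k, SimpleGraph.ConnectedComponent.exact same_component, hxj, hyk⟩

lemma not_reachable_of_mem_componentUnion {G : SimpleGraph ι} {B : ι → Set X} {i i' : ι} {x y : X}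
    (hi : i ≠ i') (hx : x ∈ componentUnion G B i) (hy : y ∈ componentUnion G B i') :
    ∃ j k, ¬ G.Reachable j k ∧ x ∈ B j ∧ y ∈ B k := by
  obtain ⟨j, rfl, hxj⟩ := mem_componentUnion.1 hx
  obtain ⟨k, rfl, hyk⟩ := mem_componentUnion.1 hy
  refine ⟨j, k, fun hjk ↦ hi ?_, hxj, hyk⟩
  rw [SimpleGraph.ConnectedComponent.sound hjk]

end ComponentUnion

section ProximityGraph

variable {ι X : Type*} [MetricSpace X] {D R : ℝ} {B : ι → Set X}

/-- The graph on the index set of a family `B` in which distinct indices are adjacent when the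
corresponding members contain points at distance less than `R`. -/
def proximityGraph (R : ℝ) (B : ι → Set X) : SimpleGraph ι where
  Adj i j := i ≠ j ∧ ∃ a ∈ B i, ∃ b ∈ B j, dist a b < R
  symm := ⟨fun _ _ ⟨hij, a, ha, b, hb, hab⟩ ↦ ⟨hij.symm, b, hb, a, ha, by rwa [dist_comm]⟩⟩
  loopless := ⟨fun _ h ↦ h.1 rfl⟩

lemma dist_le_of_proximityGraph_walk (hB : ∀ i, UBdd D (B i)) {i j : ι}
    (p : (proximityGraph R B).Walk i j) {a b : X} (ha : a ∈ B i) (hb : b ∈ B j) :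
    dist a b ≤ D + p.length * (D + R) := by
  induction p generalizing a with
  | nil => simpa using hB _ a ha b hb
  | cons hadj p ih =>
    obtain ⟨c, hc, d, hd, hcd⟩ := hadj.2
    calc dist a b ≤ dist a c + dist c d + dist d b := dist_triangle4 a c d b
      _ ≤ D + R + (D + p.length * (D + R)) :=
          add_le_add (add_le_add (hB _ a ha c hc) hcd.le) (ih hd hb)
      _ = D + (p.cons hadj).length * (D + R) := by
          rw [SimpleGraph.Walk.length_cons]; push_cast; ring

lemma dist_le_of_proximityGraph_reachable [Fintype ι] (hR : 0 ≤ R) (hB : ∀ i, UBdd D (B i))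
    {i j : ι} (hij : (proximityGraph R B).Reachable i j) {a b : X} (ha : a ∈ B i) (hb : b ∈ B j) :
    dist a b ≤ D + Fintype.card ι * (D + R) := by
  obtain ⟨p, hp⟩ := hij.exists_isPath
  have hD : 0 ≤ D := dist_nonneg.trans (hB i a ha a ha)
  calc dist a b ≤ D + p.length * (D + R) := dist_le_of_proximityGraph_walk hB p ha hb
    _ ≤ D + Fintype.card ι * (D + R) := by gcongr; exact hp.length_lt.le

lemma le_dist_of_not_proximityGraph_reachable {i j : ι}
    (hij : ¬ (proximityGraph R B).Reachable i j) {a b : X} (ha : a ∈ B i) (hb : b ∈ B j) :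
    R ≤ dist a b := by
  by_contra! hab
  have hne : i ≠ j := fun h ↦ hij (h ▸ .rfl)
  have hadj : (proximityGraph R B).Adj i j := ⟨hne, a, ha, b, hb, hab⟩
  exact hij hadj.reachable

lemma exists_uBdd_separated_iUnion_eq [Fintype ι] (hR : 0 ≤ R) (hB : ∀ i, UBdd D (B i)) :
    ∃ C : ι → Set X, ⋃ i, C i = ⋃ i, B i ∧ (∀ i, UBdd (D + Fintype.card ι * (D + R)) (C i)) ∧
      ∀ i j, i ≠ j → ∀ a ∈ C i, ∀ b ∈ C j, R ≤ dist a b := by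
  refine ⟨componentUnion (proximityGraph R B) B, iUnion_componentUnion _ B, ?bounded, ?separated⟩
  case bounded =>
    intro i a ha b hb
    obtain ⟨j, k, hjk, haj, hbk⟩ := reachable_of_mem_componentUnion ha hb
    exact dist_le_of_proximityGraph_reachable hR hB hjk haj hbk
  case separated =>
    intro i i' hi a ha b hb
    obtain ⟨j, k, hjk, haj, hbk⟩ := not_reachable_of_mem_componentUnion hi ha hb
    exact le_dist_of_not_proximityGraph_reachable hjk haj hbk

end ProximityGraph

lemma coarselyNTo1_iff_preimage_ball {X Y : Type*} [MetricSpace X] [MetricSpace Y] {n : ℕ}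
    {f : X → Y} :
    CoarselyNTo1 n f ↔ ∀ S > (0 : ℝ), ∃ T > (0 : ℝ), ∀ y : Y,
      ∃ B : Fin n → Set X, f ⁻¹' ball y S ⊆ ⋃ i, B i ∧ ∀ i, UBdd T (B i) := by
  constructor
  · intro hf S hS
    obtain ⟨T, hT, hcover⟩ := hf (2 * S) (by positivity)
    exact ⟨T, hT, fun y ↦ hcover _ (uBdd_ball y S)⟩
  · intro hball R hR
    obtain ⟨T, hT, hcover⟩ := hball (R + 1) (by positivity)
    refine ⟨T, hT, fun A hA ↦ ?_⟩
    rcases A.eq_empty_or_nonempty with rfl | ⟨y, hy⟩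
    · exact ⟨fun _ ↦ ∅, by simp, fun _ _ hx ↦ hx.elim⟩
    · obtain ⟨B, hB, hBT⟩ := hcover y
      have hAy : A ⊆ ball y (R + 1) := hA.subset_ball hy (lt_add_one R)
      exact ⟨B, (preimage_mono hAy).trans hB, hBT⟩

/-- A map of metric spaces is coarsely `n`-to-`1` iff for all `R, S > 0` there is `T > 0`
such that preimages of open `S`-balls can be covered by at most `n` sets of diameter at
most `T` which are pairwise `R`-disjoint. -/
theorem stmt2 {X Y : Type*} [MetricSpace X] [MetricSpace Y] (n : ℕ) (hn : 1 ≤ n)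
    (f : X → Y) :
    CoarselyNTo1 n f ↔
    ∀ R > (0:ℝ), ∀ S > (0:ℝ), ∃ T > (0:ℝ), ∀ y : Y,
      ∃ B : Fin n → Set X, f ⁻¹' (Metric.ball y S) ⊆ ⋃ i, B i ∧ (∀ i, UBdd T (B i)) ∧
        ∀ i j, i ≠ j → ∀ a ∈ B i, ∀ b ∈ B j, R ≤ dist a b := by
  rw [coarselyNTo1_iff_preimage_ball]
  constructor
  · intro hball R hR S hS
    obtain ⟨D, hD, hcover⟩ := hball S hS
    refine ⟨D + Fintype.card (Fin n) * (D + R), by positivity, fun y ↦ ?_⟩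
    obtain ⟨B, hB, hBD⟩ := hcover y
    obtain ⟨C, hCB, hC⟩ := exists_uBdd_separated_iUnion_eq hR.le hBD
    exact ⟨C, hB.trans hCB.ge, hC⟩
  · intro hsep S hS
    obtain ⟨T, hT, hcover⟩ := hsep 1 one_pos S hS
    refine ⟨T, hT, fun y ↦ ?_⟩
    obtain ⟨B, hB, hBT, -⟩ := hcover y
    exact ⟨B, hB, hBT⟩
end

section
/- Let X be a metric space with the midpoint property, let 𝒱 be a family of subsets of X, and let R > 0. For V ∈ 𝒱 let st(V) denote the star of V with respect to the cover of X by all open balls of radius R/2, i.e. st(V) is the union of all open balls B(x, R/2), x ∈ X, that intersect V. Then the family { st(V) : V ∈ 𝒱 } is pairwise disjoint (st(A) ∩ st(B) = ∅ for distinct A, B ∈ 𝒱) if and only if 𝒱 is 2R-disjoint, i.e. dist(a,b) ≥ 2R whenever a ∈ A, b ∈ B for distinct members A, B of 𝒱. -/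
open Metric Set

/-!
The star of `A` with respect to the balls of radius `r` is always `A` thickened twice by `r`.
Midpoints merge the two thickenings into a single one by `2r`, and say that the `R`-thickenings of
two sets meet exactly when some pair of their points is at distance less than `2R`.
-/

/-- A space has approximate midpoints if any two points have, for every `ε > 0`, a point at
distance less than half their distance plus `ε` from both. Every length space has them, and they
make two open `r`-balls meet as soon as their centres are at distance less than `2 * r`. -/
def HasApproxMidpoints (X : Type*) [PseudoMetricSpace X] : Prop :=
  ∀ x y : X, ∀ ε > 0, ∃ z, dist x z < dist x y / 2 + ε ∧ dist z y < dist x y / 2 + ε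

section Star

variable {X : Type*}

theorem starOf_range {ι : Type*} (A : Set X) (U : ι → Set X) :
    StarOf A (range U) = ⋃ i ∈ {i | (U i ∩ A).Nonempty}, U i := by
  ext x
  simp only [StarOf, mem_sUnion, mem_ofPred_eq, mem_iUnion, exists_prop, mem_range,
    and_assoc, exists_exists_eq_and]

theorem starOf_range_ball [PseudoMetricSpace X] (A : Set X) (r : ℝ) :
    StarOf A (range fun x => ball x r) = thickening r (thickening r A) := by
  rw [starOf_range, thickening_eq_biUnion_ball (E := thickening r A)]
  congr! 3 with x
  simp only [mem_ofPred_eq, mem_thickening_iff, Set.Nonempty, mem_inter_iff, mem_ball',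
    and_comm]

end Star

namespace HasApproxMidpoints

variable {X : Type*} [PseudoMetricSpace X]

theorem of_midpoints
    (hmid : ∀ x y : X, ∃ z, dist x z = dist x y / 2 ∧ dist z y = dist x y / 2) :
    HasApproxMidpoints X := by
  intro x y ε hε
  obtain ⟨z, hxz, hzy⟩ := hmid x y
  exact ⟨z, by linarith, by linarith⟩

theorem exists_dist_lt_iff (h : HasApproxMidpoints X) {x y : X} {r : ℝ} :
    (∃ z, dist x z < r ∧ dist z y < r) ↔ dist x y < 2 * r := by
  constructor
  · rintro ⟨z, hxz, hzy⟩
    linarith [dist_triangle x z y]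
  · intro hxy
    obtain ⟨z, hxz, hzy⟩ := h x y (r - dist x y / 2) (by linarith)
    exact ⟨z, by linarith, by linarith⟩

theorem thickening_thickening (h : HasApproxMidpoints X) (r : ℝ) (A : Set X) :
    thickening r (thickening r A) = thickening (2 * r) A := by
  ext x
  calc x ∈ thickening r (thickening r A)
      ↔ ∃ a ∈ A, ∃ z, dist x z < r ∧ dist z a < r := by
        simp only [mem_thickening_iff]
        tauto
    _ ↔ x ∈ thickening (2 * r) A := by
        simp only [h.exists_dist_lt_iff, mem_thickening_iff]

theorem disjoint_thickening_iff (h : HasApproxMidpoints X) {r : ℝ} {A B : Set X} :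
    Disjoint (thickening r A) (thickening r B) ↔ ∀ a ∈ A, ∀ b ∈ B, 2 * r ≤ dist a b := by
  calc Disjoint (thickening r A) (thickening r B)
      ↔ ∀ a ∈ A, ∀ b ∈ B, ¬∃ z, dist a z < r ∧ dist z b < r := by
        simp only [disjoint_left, mem_thickening_iff]
        grind [dist_comm]
    _ ↔ ∀ a ∈ A, ∀ b ∈ B, 2 * r ≤ dist a b := by
        simp only [h.exists_dist_lt_iff, not_lt]

end HasApproxMidpoints

theorem stmt3_general {X : Type*} [PseudoMetricSpace X] (h : HasApproxMidpoints X)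
    (𝒱 : Set (Set X)) (R : ℝ) :
    (𝒱.PairwiseDisjoint fun A => StarOf A (range fun x => ball x (R / 2))) ↔
      𝒱.Pairwise fun A B => ∀ a ∈ A, ∀ b ∈ B, 2 * R ≤ dist a b := by
  have star_eq (A : Set X) : StarOf A (range fun x => ball x (R / 2)) = thickening R A := by
    rw [starOf_range_ball, h.thickening_thickening, mul_div_cancel₀ R two_ne_zero]
  simp only [star_eq, PairwiseDisjoint, Set.Pairwise, Function.onFun, h.disjoint_thickening_iff]

/-- In a metric space with the midpoint property, the stars of a family `𝒱` with respect
to the cover by open balls of radius `R/2` are pairwise disjoint iff `𝒱` is `2R`-disjoint. -/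
theorem stmt3 {X : Type*} [MetricSpace X]
    (hmid : ∀ x y : X, ∃ z : X, dist x z = dist x y / 2 ∧ dist z y = dist x y / 2)
    (𝒱 : Set (Set X)) (R : ℝ) (hR : 0 < R) :
    (∀ A ∈ 𝒱, ∀ B ∈ 𝒱, A ≠ B →
      (⋃ x ∈ {x : X | (Metric.ball x (R / 2) ∩ A).Nonempty}, Metric.ball x (R / 2)) ∩
      (⋃ x ∈ {x : X | (Metric.ball x (R / 2) ∩ B).Nonempty}, Metric.ball x (R / 2)) = ∅) ↔
    RDisjoint (2 * R) 𝒱 := by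
  simpa only [starOf_range, disjoint_iff_inter_eq_empty, PairwiseDisjoint, Set.Pairwise,
    Function.onFun, RDisjoint] using stmt3_general (.of_midpoints hmid) 𝒱 R
end

section
/- Let X be a metric space and for each i ≥ 1 let ℬᵢ be a family of subsets of X. The following are equivalent: (1) there exists a sequence of positive reals Rᵢ tending to infinity such that ℬᵢ is Rᵢ-disjoint for each i; (2) there exists a sequence of covers 𝒰ᵢ of X and a sequence of positive reals Lᵢ tending to infinity such that each 𝒰ᵢ has Lebesgue number at least Lᵢ and for each i the family of stars { st(B, 𝒰ᵢ) : B ∈ ℬᵢ } is pairwise disjoint. -/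
open Metric Set

/-!
A star is squeezed between two thickenings. If `𝒰` has Lebesgue number at least `L`, then `st(B, 𝒰)`
contains the `L`-thickening of `B`; and if `𝒰` consists of the balls of radius `r`, then `st(B, 𝒰)`
is contained in the `2r`-thickening of `B`. It therefore suffices to compare `R`-disjointness with
disjointness of thickenings, and the triangle inequality does this up to a factor of two.
-/

section Thickening

variable {X : Type*} [MetricSpace X] {𝒱 : Set (Set X)} {r : ℝ}

theorem RDisjoint.pairwiseDisjoint_thickening {R : ℝ} (h : RDisjoint R 𝒱) (hr : 2 * r ≤ R) :
    𝒱.PairwiseDisjoint (thickening r) := by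
  intro A hA B hB hAB
  refine Set.disjoint_left.2 fun x hxA hxB => ?_
  obtain ⟨a, ha, hxa⟩ := mem_thickening_iff.1 hxA
  obtain ⟨b, hb, hxb⟩ := mem_thickening_iff.1 hxB
  have hRab : R ≤ dist a b := h A hA B hB hAB a ha b hb
  linarith [dist_triangle_left a b x]

theorem rDisjoint_of_pairwiseDisjoint_thickening (h : 𝒱.PairwiseDisjoint (thickening r)) :
    RDisjoint r 𝒱 := by
  intro A hA B hB hAB a ha b hb
  by_contra! hab
  have haA : a ∈ thickening r A :=
    self_subset_thickening (dist_nonneg.trans_lt hab) A ha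
  have haB : a ∈ thickening r B := mem_thickening_iff.2 ⟨b, hb, hab⟩
  exact Set.disjoint_left.1 (h hA hB hAB) haA haB

end Thickening

section Star

variable {X : Type*} [MetricSpace X]

theorem LebAtLeast.isCover_s4 {L : ℝ} {𝒰 : Set (Set X)} (h : LebAtLeast L 𝒰) (hL : 0 < L) :
    IsCover 𝒰 := fun x =>
  let ⟨U, hU, hball⟩ := h x
  ⟨U, hU, hball (mem_ball_self hL)⟩

theorem lebAtLeast_range_ball (r : ℝ) : LebAtLeast r (range fun x : X => ball x r) :=
  fun x => ⟨ball x r, mem_range_self x, subset_rfl⟩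

theorem LebAtLeast.thickening_subset_starOf {L : ℝ} {𝒰 : Set (Set X)} (h : LebAtLeast L 𝒰)
    (B : Set X) : thickening L B ⊆ StarOf B 𝒰 := by
  intro x hx
  obtain ⟨b, hb, hxb⟩ := mem_thickening_iff.1 hx
  obtain ⟨U, hU, hball⟩ := h x
  have hbU : b ∈ U := hball (mem_ball'.2 hxb)
  have hxU : x ∈ U := hball (mem_ball_self (dist_nonneg.trans_lt hxb))
  exact ⟨U, ⟨hU, b, hbU, hb⟩, hxU⟩

theorem starOf_range_ball_subset_thickening (B : Set X) (r : ℝ) :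
    StarOf B (range fun x => ball x r) ⊆ thickening (2 * r) B := by
  rintro x ⟨_, ⟨⟨c, rfl⟩, b, hbc, hb⟩, hxc⟩
  refine mem_thickening_iff.2 ⟨b, hb, ?_⟩
  calc dist x b ≤ dist x c + dist b c := dist_triangle_right x b c
    _ < r + r := add_lt_add hxc hbc
    _ = 2 * r := (two_mul r).symm

theorem RDisjoint.pairwiseDisjoint_starOf_range_ball {R r : ℝ} {𝒱 : Set (Set X)}
    (h : RDisjoint R 𝒱) (hr : 4 * r ≤ R) :
    𝒱.PairwiseDisjoint (StarOf · (range fun x => ball x r)) :=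
  (h.pairwiseDisjoint_thickening (by linarith)).mono fun B =>
    starOf_range_ball_subset_thickening B r

theorem LebAtLeast.rDisjoint {L : ℝ} {𝒰 𝒱 : Set (Set X)} (h : LebAtLeast L 𝒰)
    (h𝒱 : 𝒱.PairwiseDisjoint (StarOf · 𝒰)) : RDisjoint L 𝒱 :=
  rDisjoint_of_pairwiseDisjoint_thickening <| h𝒱.mono h.thickening_subset_starOf

end Star

theorem stmt4_general {X ι : Type*} [MetricSpace X] (l : Filter ι) (ℬ : ι → Set (Set X)) :
    (∃ R : ι → ℝ, (∀ i, 0 < R i) ∧ Filter.Tendsto R l Filter.atTop ∧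
      ∀ i, RDisjoint (R i) (ℬ i)) ↔
    (∃ 𝒰 : ι → Set (Set X), ∃ L : ι → ℝ, (∀ i, 0 < L i) ∧
      Filter.Tendsto L l Filter.atTop ∧
      ∀ i, IsCover (𝒰 i) ∧ LebAtLeast (L i) (𝒰 i) ∧
        ∀ A ∈ ℬ i, ∀ B ∈ ℬ i, A ≠ B → StarOf A (𝒰 i) ∩ StarOf B (𝒰 i) = ∅) := by
  constructor
  · rintro ⟨R, hR, hlim, hdisj⟩
    have hpos (i : ι) : 0 < R i / 4 := div_pos (hR i) four_pos
    have hleb (i : ι) := lebAtLeast_range_ball (X := X) (R i / 4)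
    refine ⟨fun i => range fun x => ball x (R i / 4), fun i => R i / 4, hpos,
      hlim.atTop_div_const four_pos, fun i => ⟨(hleb i).isCover_s4 (hpos i), hleb i, ?_⟩⟩
    have hscale : 4 * (R i / 4) ≤ R i := (mul_div_cancel₀ (R i) four_ne_zero).le
    have hstar := (hdisj i).pairwiseDisjoint_starOf_range_ball hscale
    exact fun A hA B hB hAB => (hstar hA hB hAB).inter_eq
  · rintro ⟨𝒰, L, hL, hlim, h⟩
    refine ⟨L, hL, hlim, fun i => ?_⟩
    obtain ⟨-, hleb, hstar⟩ := h i
    exact hleb.rDisjoint fun A hA B hB hAB =>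
      Set.disjoint_iff_inter_eq_empty.2 (hstar A hA B hB hAB)

/-- A sequence of families is `Rᵢ`-disjoint for some sequence `Rᵢ → ∞` iff there are covers
`𝒰ᵢ` with Lebesgue numbers tending to infinity making the stars of each family pairwise
disjoint. -/
theorem stmt4 {X : Type*} [MetricSpace X] (ℬ : ℕ → Set (Set X)) :
    (∃ R : ℕ → ℝ, (∀ i, 0 < R i) ∧ Filter.Tendsto R Filter.atTop Filter.atTop ∧
      ∀ i, RDisjoint (R i) (ℬ i)) ↔
    (∃ 𝒰 : ℕ → Set (Set X), ∃ L : ℕ → ℝ, (∀ i, 0 < L i) ∧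
      Filter.Tendsto L Filter.atTop Filter.atTop ∧
      ∀ i, IsCover (𝒰 i) ∧ LebAtLeast (L i) (𝒰 i) ∧
        ∀ A ∈ ℬ i, ∀ B ∈ ℬ i, A ≠ B → StarOf A (𝒰 i) ∩ StarOf B (𝒰 i) = ∅) :=
  stmt4_general Filter.atTop ℬ
end

section
/- Let X and Y be metric spaces and let f : X → Y be a surjective map that is coarse and coarsely n-to-1 for some integer n ≥ 1. If X is large scale weakly paracompact then so is Y. -/
open Metric Set

/-! The images `f '' V` of the members of a cover `𝒱` of `X` form the required cover of `Y`: since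
`f '' V` meets `A` exactly when `V` meets `f ⁻¹' A`, and `f ⁻¹' A` splits into finitely many sets of
controlled diameter, local finiteness of `𝒱` at that diameter passes to the images. -/

section

variable {X Y : Type*}

theorem IsCover.image_of_surjective {f : X → Y} (hf : Function.Surjective f) {𝒱 : Set (Set X)}
    (h𝒱 : IsCover 𝒱) : IsCover (image f '' 𝒱) := by
  intro y
  obtain ⟨x, rfl⟩ := hf y
  obtain ⟨V, hV, hxV⟩ := h𝒱 x
  exact ⟨f '' V, mem_image_of_mem _ hV, mem_image_of_mem f hxV⟩

theorem sep_image_inter_nonempty_eq_image (f : X → Y) (𝒱 : Set (Set X)) (A : Set Y) :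
    {W ∈ image f '' 𝒱 | (W ∩ A).Nonempty} =
      image f '' {V ∈ 𝒱 | (V ∩ f ⁻¹' A).Nonempty} := by
  ext W
  constructor
  · rintro ⟨⟨V, hV, rfl⟩, hVA⟩
    exact ⟨V, ⟨hV, image_inter_nonempty_iff.mp hVA⟩, rfl⟩
  · rintro ⟨V, ⟨hV, hVA⟩, rfl⟩
    exact ⟨mem_image_of_mem _ hV, image_inter_nonempty_iff.mpr hVA⟩

variable [MetricSpace X] [MetricSpace Y]

theorem UBdd.image {f : X → Y} {D E : ℝ} (hf : ∀ x x', dist x x' ≤ D → dist (f x) (f x') ≤ E)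
    {U : Set X} (hU : UBdd D U) : UBdd E (f '' U) := by
  rintro _ ⟨x, hx, rfl⟩ _ ⟨x', hx', rfl⟩
  exact hf x x' (hU x hx x' hx')

/-- Local finiteness of the family `𝒱` at scale `R`: every set of diameter at most `R` meets only
finitely many members of `𝒱`. -/
def FiniteAtScale (R : ℝ) (𝒱 : Set (Set X)) : Prop :=
  ∀ A : Set X, UBdd R A → {V ∈ 𝒱 | (V ∩ A).Nonempty}.Finite

/-- `A` is covered by finitely many sets of diameter at most `S`, with no bound on their number. -/
def FinitelyCoverable (S : ℝ) (A : Set X) : Prop :=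
  ∃ ℬ : Set (Set X), ℬ.Finite ∧ A ⊆ ⋃₀ ℬ ∧ ∀ B ∈ ℬ, UBdd S B

/-- A map is coarsely finite-to-one if preimages of sets of diameter at most `R` are covered by
finitely many sets of diameter at most `S`, where `S` depends only on `R`. This relaxes
`CoarselyNTo1`: the number of sets may depend on the set whose preimage is covered. -/
def CoarselyFiniteToOne (f : X → Y) : Prop :=
  ∀ R > (0 : ℝ), ∃ S > (0 : ℝ), ∀ A : Set Y, UBdd R A → FinitelyCoverable S (f ⁻¹' A)

/-- Large scale weak paracompactness of a metric space: at every scale there is a uniformly bounded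
cover that is locally finite at that scale. -/
def LargeScaleWeaklyParacompact (X : Type*) [MetricSpace X] : Prop :=
  ∀ R > (0 : ℝ), ∃ 𝒱 : Set (Set X), ∃ D > (0 : ℝ),
    IsCover 𝒱 ∧ (∀ U ∈ 𝒱, UBdd D U) ∧ FiniteAtScale R 𝒱

theorem CoarselyNTo1.coarselyFiniteToOne {n : ℕ} {f : X → Y} (hf : CoarselyNTo1 n f) :
    CoarselyFiniteToOne f := by
  intro R hR
  obtain ⟨S, hS, hcover⟩ := hf R hR
  refine ⟨S, hS, fun A hA => ?_⟩
  obtain ⟨B, hAB, hB⟩ := hcover A hA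
  exact ⟨range B, finite_range B, hAB, forall_mem_range.mpr hB⟩

theorem FiniteAtScale.finite_of_finitelyCoverable {S : ℝ} {𝒱 : Set (Set X)}
    (h𝒱 : FiniteAtScale S 𝒱) {A : Set X} (hA : FinitelyCoverable S A) :
    {V ∈ 𝒱 | (V ∩ A).Nonempty}.Finite := by
  obtain ⟨ℬ, hℬ, hAℬ, hbdd⟩ := hA
  have hfin : (⋃ B ∈ ℬ, {V ∈ 𝒱 | (V ∩ B).Nonempty}).Finite :=
    hℬ.biUnion fun B hB => h𝒱 B (hbdd B hB)
  refine hfin.subset ?_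
  rintro V ⟨hV, x, hxV, hxA⟩
  obtain ⟨B, hB, hxB⟩ := hAℬ hxA
  exact mem_biUnion hB ⟨hV, x, hxV, hxB⟩

theorem FiniteAtScale.image {f : X → Y} {R S : ℝ}
    (hf : ∀ A : Set Y, UBdd R A → FinitelyCoverable S (f ⁻¹' A)) {𝒱 : Set (Set X)}
    (h𝒱 : FiniteAtScale S 𝒱) : FiniteAtScale R (image f '' 𝒱) := by
  intro A hA
  rw [sep_image_inter_nonempty_eq_image]
  exact (h𝒱.finite_of_finitelyCoverable (hf A hA)).image _

theorem stmt10_general {f : X → Y} (hsurj : Function.Surjective f) (hcoarse : Coarse f)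
    (hfin : CoarselyFiniteToOne f) (hX : LargeScaleWeaklyParacompact X) :
    LargeScaleWeaklyParacompact Y := by
  intro R hR
  obtain ⟨S, hS, hpre⟩ := hfin R hR
  obtain ⟨𝒱, D, hD, hcov, hbdd, hlf⟩ := hX S hS
  obtain ⟨E, hE, hDE⟩ := hcoarse D hD
  exact ⟨image f '' 𝒱, E, hE, hcov.image_of_surjective hsurj,
    forall_mem_image.mpr fun U hU => (hbdd U hU).image hDE, hlf.image hpre⟩

end

/-- Large scale weak paracompactness is pushed forward by surjective coarse, coarsely
`n`-to-`1` maps. -/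
theorem stmt10 {X Y : Type*} [MetricSpace X] [MetricSpace Y] (n : ℕ) (hn : 1 ≤ n)
    (f : X → Y) (hsurj : Function.Surjective f) (hcoarse : Coarse f)
    (hnto1 : CoarselyNTo1 n f)
    (hX : ∀ R > (0:ℝ), ∃ 𝒱 : Set (Set X), ∃ D > (0:ℝ), IsCover 𝒱 ∧
      (∀ U ∈ 𝒱, UBdd D U) ∧
      ∀ A : Set X, UBdd R A → {V ∈ 𝒱 | (V ∩ A).Nonempty}.Finite) :
    ∀ R > (0:ℝ), ∃ 𝒲 : Set (Set Y), ∃ D > (0:ℝ), IsCover 𝒲 ∧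
      (∀ W ∈ 𝒲, UBdd D W) ∧
      ∀ A : Set Y, UBdd R A → {W ∈ 𝒲 | (W ∩ A).Nonempty}.Finite :=
  stmt10_general hsurj hcoarse hnto1.coarselyFiniteToOne hX
end

section
/- Let X and Y be metric spaces and let f : X → Y be a surjective map that is coarsely n-to-1 for some integer n ≥ 1. If X has bounded geometry then Y has bounded geometry; more precisely, if every subset of X of diameter at most S has at most m(S) points for every S > 0, then for every R > 0 every subset of Y of diameter at most R has at most n·m(S) points, where S is the constant witnessing the coarsely n-to-1 condition for R. -/
open Metric Set

theorem encard_le_card_mul_of_subset_iUnion {α ι : Type*} [Fintype ι] {s : Set α} {B : ι → Set α}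
    {c : ℕ∞} (hs : s ⊆ ⋃ i, B i) (hB : ∀ i, (B i).encard ≤ c) :
    s.encard ≤ Fintype.card ι * c :=
  calc s.encard ≤ (⋃ i, B i).encard := encard_le_encard hs
    _ ≤ ∑ i, (B i).encard := encard_iUnion_le_of_fintype B
    _ ≤ ∑ _i : ι, c := Finset.sum_le_sum fun i _ => hB i
    _ = Fintype.card ι * c := by simp

theorem encard_le_encard_preimage_of_subset_range {α β : Type*} {f : α → β} {t : Set β}
    (ht : t ⊆ range f) : t.encard ≤ (f ⁻¹' t).encard :=
  calc t.encard = (f '' (f ⁻¹' t)).encard := by rw [image_preimage_eq_of_subset ht]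
    _ ≤ (f ⁻¹' t).encard := encard_image_le f _

theorem stmt11_general {X Y : Type*} [MetricSpace X] [MetricSpace Y] {n k : ℕ} {R S : ℝ}
    {f : X → Y}
    (hcover : ∀ A : Set Y, UBdd R A →
      ∃ B : Fin n → Set X, f ⁻¹' A ⊆ ⋃ i, B i ∧ ∀ i, UBdd S (B i))
    (hX : ∀ B : Set X, UBdd S B → B.Finite ∧ B.ncard ≤ k)
    {A : Set Y} (hA : UBdd R A) (hrange : A ⊆ range f) :
    A.Finite ∧ A.ncard ≤ n * k := by
  obtain ⟨B, hpreimage, hB⟩ := hcover A hA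
  have hBcard (i : Fin n) : (B i).encard ≤ k :=
    encard_le_coe_iff_finite_ncard_le.2 (hX (B i) (hB i))
  have hAcard : A.encard ≤ (n * k : ℕ) :=
    calc A.encard ≤ (f ⁻¹' A).encard := encard_le_encard_preimage_of_subset_range hrange
      _ ≤ Fintype.card (Fin n) * k := encard_le_card_mul_of_subset_iUnion hpreimage hBcard
      _ = (n * k : ℕ) := by rw [Fintype.card_fin, Nat.cast_mul]
  exact encard_le_coe_iff_finite_ncard_le.1 hAcard

/-- Bounded geometry is pushed forward by surjective coarsely `n`-to-`1` maps, with the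
explicit bound: subsets of `Y` of diameter at most `R` have at most `n * m S` points,
where `S` witnesses the coarsely `n`-to-`1` condition for `R` and `m S` bounds the number
of points of subsets of `X` of diameter at most `S`. -/
theorem stmt11 {X Y : Type*} [MetricSpace X] [MetricSpace Y] (n : ℕ) (hn : 1 ≤ n)
    (f : X → Y) (hsurj : Function.Surjective f) (hnto1 : CoarselyNTo1 n f) (m : ℝ → ℕ)
    (hX : ∀ S > (0:ℝ), ∀ A : Set X, UBdd S A → A.Finite ∧ A.ncard ≤ m S) :
    ∀ R > (0:ℝ), ∀ S > (0:ℝ),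
      (∀ A : Set Y, UBdd R A →
        ∃ B : Fin n → Set X, f ⁻¹' A ⊆ ⋃ i, B i ∧ ∀ i, UBdd S (B i)) →
      ∀ A : Set Y, UBdd R A → A.Finite ∧ A.ncard ≤ n * m S := by
  intro R _ S hS hcover A hA
  exact stmt11_general hcover (hX S hS) hA (hsurj.range_eq ▸ subset_univ A)
end

section
/- Let X and Y be metric spaces and let f : X → Y be coarse and coarsely n-to-1 for some integer n ≥ 1. If Y has bounded geometry, then there exists a subset Z ⊆ X such that Z (with the induced metric) has bounded geometry and Z is a net in X, i.e. there exists C > 0 such that every point of X is within distance C of some point of Z; in particular the inclusion Z ↪ X is a coarse equivalence. -/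
open Metric Set

/-!
Each fibre of `f` is a union of at most `n` pieces of uniformly bounded diameter; keeping one point
of each piece gives a net `Z` meeting every fibre in at most `n` points. A bounded subset of `Z` has
bounded image, hence boundedly many values, each of which it takes at most `n` times.
-/

/-- Bounded geometry of the subspace `Z`: the number of points of a subset of `Z` is bounded in
terms of its diameter. The bound is on pairwise distances because `Metric.diam` of an unbounded set
is `0`. -/
def BoundedGeometryOn {X : Type*} [PseudoMetricSpace X] (Z : Set X) : Prop :=
  ∀ R > (0 : ℝ), ∃ m : ℕ, ∀ A ⊆ Z, (∀ x ∈ A, ∀ y ∈ A, dist x y ≤ R) → A.encard ≤ m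

theorem exists_subset_encard_le_of_subset_iUnion {α ι : Type*} {A : Set α} {B : ι → Set α}
    (hAB : A ⊆ ⋃ i, B i) :
    ∃ T ⊆ A, T.encard ≤ ENat.card ι ∧ ∀ a ∈ A, ∃ t ∈ T, ∃ i, a ∈ B i ∧ t ∈ B i := by
  let I := {i | (A ∩ B i).Nonempty}
  choose p hpA hpB using fun i : I ↦ i.2
  refine ⟨range p, range_subset_iff.2 hpA, ?_, fun a ha ↦ ?_⟩
  · calc (range p).encard ≤ (univ : Set I).encard := image_univ (f := p) ▸ encard_image_le p univ
      _ = I.encard := (encard_univ I).trans (ENat.card_coe_set_eq I)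
      _ ≤ ENat.card ι := encard_le_card
  · obtain ⟨i, hi⟩ := mem_iUnion.1 (hAB ha)
    let i' : I := ⟨i, a, ha, hi⟩
    exact ⟨p i', mem_range_self i', i, hi, hpB i'⟩

theorem encard_le_encard_image_mul {α β : Type*} {f : α → β} {A : Set α} {n : ℕ∞}
    (hfiber : ∀ b ∈ f '' A, (A ∩ f ⁻¹' {b}).encard ≤ n) : A.encard ≤ (f '' A).encard * n := by
  rcases (f '' A).finite_or_infinite with hfin | hinf
  · have hAcover : A ⊆ ⋃ b ∈ hfin.toFinset, A ∩ f ⁻¹' {b} := fun a ha ↦ by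
      simpa using ⟨ha, a, ha, rfl⟩
    calc A.encard ≤ (⋃ b ∈ hfin.toFinset, A ∩ f ⁻¹' {b}).encard := encard_le_encard hAcover
      _ ≤ ∑ b ∈ hfin.toFinset, (A ∩ f ⁻¹' {b}).encard := Finset.set_encard_biUnion_le _ _
      _ ≤ hfin.toFinset.card • n :=
        Finset.sum_le_card_nsmul _ _ _ fun b hb ↦ hfiber b (hfin.mem_toFinset.1 hb)
      _ = (f '' A).encard * n := by rw [hfin.encard_eq_coe_toFinset_card, nsmul_eq_mul]
  · obtain ⟨_, a, ha, rfl⟩ := hinf.nonempty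
    have hfiber_pos : 0 < (A ∩ f ⁻¹' {f a}).encard := encard_pos.2 ⟨a, ha, rfl⟩
    have hn : n ≠ 0 := (hfiber_pos.trans_le (hfiber _ (mem_image_of_mem f ha))).ne'
    simp only [hinf.encard_eq, ENat.top_mul hn, le_top]

theorem exists_net_encard_fiber_le {X Y ι : Type*} [PseudoMetricSpace X] {f : X → Y} {S : ℝ}
    (hcover : ∀ y, ∃ B : ι → Set X,
      f ⁻¹' {y} ⊆ ⋃ i, B i ∧ ∀ i, ∀ x ∈ B i, ∀ x' ∈ B i, dist x x' ≤ S) :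
    ∃ Z : Set X, (∀ y, (Z ∩ f ⁻¹' {y}).encard ≤ ENat.card ι) ∧ ∀ x, ∃ z ∈ Z, dist x z ≤ S := by
  choose B hB hBS using hcover
  choose T hTfiber hTcard hT using fun y ↦ exists_subset_encard_le_of_subset_iUnion (hB y)
  refine ⟨⋃ y, T y, fun y ↦ ?_, fun x ↦ ?_⟩
  · have hsub : (⋃ y', T y') ∩ f ⁻¹' {y} ⊆ T y := by
      rintro z ⟨hz, rfl⟩
      obtain ⟨y', hy'⟩ := mem_iUnion.1 hz
      obtain rfl : f z = y' := hTfiber y' hy'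
      exact hy'
    exact (encard_le_encard hsub).trans (hTcard y)
  · obtain ⟨z, hz, i, hxi, hzi⟩ := hT (f x) x rfl
    exact ⟨z, mem_iUnion_of_mem (f x) hz, hBS (f x) i x hxi z hzi⟩

theorem BoundedGeometryOn.mono {X : Type*} [PseudoMetricSpace X] {W Z : Set X}
    (hZ : BoundedGeometryOn Z) (hWZ : W ⊆ Z) : BoundedGeometryOn W := fun R hR ↦
  (hZ R hR).imp fun _ hm A hAW ↦ hm A (hAW.trans hWZ)

section PseudoMetricSpace

variable {X Y : Type*} [PseudoMetricSpace X] [PseudoMetricSpace Y] {f : X → Y}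

theorem BoundedGeometryOn.of_image {Z : Set X} {n : ℕ} (himage : BoundedGeometryOn (f '' Z))
    (hf : ∀ R > (0 : ℝ), ∃ S > (0 : ℝ), ∀ x ∈ Z, ∀ x' ∈ Z, dist x x' ≤ R → dist (f x) (f x') ≤ S)
    (hfiber : ∀ y, (Z ∩ f ⁻¹' {y}).encard ≤ n) :
    BoundedGeometryOn Z := by
  intro R hR
  obtain ⟨S, hS, hRS⟩ := hf R hR
  obtain ⟨m, hm⟩ := himage S hS
  refine ⟨m * n, fun A hAZ hAR ↦ ?_⟩
  have himageA : (f '' A).encard ≤ m := by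
    refine hm _ (image_mono hAZ) ?_
    rintro _ ⟨a, ha, rfl⟩ _ ⟨b, hb, rfl⟩
    exact hRS a (hAZ ha) b (hAZ hb) (hAR a ha b hb)
  have hfiberA (y : Y) : (A ∩ f ⁻¹' {y}).encard ≤ n :=
    (encard_le_encard (inter_subset_inter_left _ hAZ)).trans (hfiber y)
  calc A.encard ≤ (f '' A).encard * n := encard_le_encard_image_mul fun y _ ↦ hfiberA y
    _ ≤ m * n := by gcongr
    _ = (m * n : ℕ) := (Nat.cast_mul m n).symm

theorem stmt12_general {ι : Type*} [Finite ι]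
    (hf : ∀ R > (0 : ℝ), ∃ S > (0 : ℝ), ∀ x x', dist x x' ≤ R → dist (f x) (f x') ≤ S)
    (hcover : ∃ S > (0 : ℝ), ∀ y, ∃ B : ι → Set X,
      f ⁻¹' {y} ⊆ ⋃ i, B i ∧ ∀ i, ∀ x ∈ B i, ∀ x' ∈ B i, dist x x' ≤ S)
    (hrange : BoundedGeometryOn (range f)) :
    ∃ Z : Set X, BoundedGeometryOn Z ∧ ∃ C > (0 : ℝ), ∀ x, ∃ z ∈ Z, dist x z ≤ C := by
  obtain ⟨S, hS, hcover⟩ := hcover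
  obtain ⟨Z, hfiber, hnet⟩ := exists_net_encard_fiber_le hcover
  simp only [ENat.card_eq_coe_natCard] at hfiber
  have hfZ : ∀ R > (0 : ℝ), ∃ S > (0 : ℝ),
      ∀ x ∈ Z, ∀ x' ∈ Z, dist x x' ≤ R → dist (f x) (f x') ≤ S := fun R hR ↦
    (hf R hR).imp fun _ ⟨hpos, hRS⟩ ↦ ⟨hpos, fun x _ x' _ ↦ hRS x x'⟩
  exact ⟨Z, (hrange.mono (image_subset_range f Z)).of_image hfZ hfiber, S, hS, hnet⟩

end PseudoMetricSpace

theorem CoarselyNTo1.exists_fiber_cover {X Y : Type*} [MetricSpace X] [MetricSpace Y] {n : ℕ}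
    {f : X → Y} (hf : CoarselyNTo1 n f) :
    ∃ S > (0 : ℝ), ∀ y, ∃ B : Fin n → Set X, f ⁻¹' {y} ⊆ ⋃ i, B i ∧ ∀ i, UBdd S (B i) := by
  obtain ⟨S, hS, hcover⟩ := hf 1 one_pos
  exact ⟨S, hS, fun y ↦ hcover {y} (by simp [UBdd])⟩

/-- If `f : X → Y` is coarse and coarsely `n`-to-`1` and `Y` has bounded geometry, then
`X` contains a bounded geometry subset `Z` that is a net in `X` (hence the inclusion
`Z ↪ X` is a coarse equivalence). -/
theorem stmt12 {X Y : Type*} [MetricSpace X] [MetricSpace Y] (n : ℕ) (hn : 1 ≤ n)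
    (f : X → Y) (hcoarse : Coarse f) (hnto1 : CoarselyNTo1 n f)
    (hY : ∀ R > (0:ℝ), ∃ m : ℕ, ∀ A : Set Y, UBdd R A → A.Finite ∧ A.ncard ≤ m) :
    ∃ Z : Set X,
      (∀ R > (0:ℝ), ∃ m : ℕ, ∀ A : Set X, A ⊆ Z → UBdd R A → A.Finite ∧ A.ncard ≤ m) ∧
      ∃ C > (0:ℝ), ∀ x : X, ∃ z ∈ Z, dist x z ≤ C := by
  simp only [← encard_le_coe_iff_finite_ncard_le] at hY ⊢
  exact stmt12_general hcoarse hnto1.exists_fiber_cover fun R hR ↦ (hY R hR).imp fun _ hm A _ ↦ hm A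
end
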